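/- arXiv:2110.05682 — 2 statements merged into one kernel-verified Lean document; each statement's English description precedes it below -/
import Mathlib

section
/- For every integer t ≥ 1 one has max_{1 ≤ i ≤ t} α_t^i ≤ 2H/t and Σ_{i=1}^t (α_t^i)^2 ≤ 2H/t. -/
open Finset

/-- The learning rate `α_t = (H+1)/(H+t)`. -/
noncomputable def lr (H t : ℕ) : ℝ := (H + 1) / (H + t)

/-- The coefficients `α_t^0 = ∏_{j=1}^t (1 - α_j)` and
    `α_t^i = α_i ∏_{j=i+1}^t (1 - α_j)` for `1 ≤ i ≤ t`. -/
noncomputable def acoef (H t i : ℕ) : ℝ :=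
  if i = 0 then ∏ j ∈ Finset.Icc 1 t, (1 - lr H j)
  else lr H i * ∏ j ∈ Finset.Icc (i + 1) t, (1 - lr H j)

/-!
The rates satisfy `α_t (1 - α_{t+1}) ≤ α_{t+1}`, so as `t` grows every coefficient `α_t^i` with
`1 ≤ i ≤ t` stays below the newest one, `α_t^t = α_t ≤ 2H/t`. The coefficients
`α_t^0, …, α_t^t` are nonnegative and sum to `1`, so the sum of the squares over `1 ≤ i ≤ t` is at
most the largest of the terms.
-/

theorem prod_one_sub_add_sum_mul_prod_one_sub {R : Type*} [CommRing R] (a : ℕ → R) (t : ℕ) :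
    ∏ j ∈ Icc 1 t, (1 - a j) + ∑ i ∈ Icc 1 t, a i * ∏ j ∈ Icc (i + 1) t, (1 - a j) = 1 := by
  induction t with
  | zero => simp
  | succ t ih =>
    have weights_succ : ∀ i ∈ Icc 1 t, a i * ∏ j ∈ Icc (i + 1) (t + 1), (1 - a j) =
        (a i * ∏ j ∈ Icc (i + 1) t, (1 - a j)) * (1 - a (t + 1)) := fun i hi => by
      rw [prod_Icc_succ_top (Nat.succ_le_succ (mem_Icc.1 hi).2), mul_assoc]
    rw [sum_Icc_succ_top (by lia), sum_congr rfl weights_succ, ← sum_mul,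
      prod_Icc_succ_top (by lia), Icc_eq_empty_of_lt (t + 1).lt_succ_self, prod_empty]
    linear_combination (1 - a (t + 1)) * ih

theorem mul_prod_one_sub_le {R : Type*} [CommRing R] [PartialOrder R] [IsOrderedRing R]
    {a : ℕ → R} {i t : ℕ} (hit : i ≤ t) (hone : ∀ j, i ≤ j → a (j + 1) ≤ 1)
    (hstep : ∀ j, i ≤ j → a j * (1 - a (j + 1)) ≤ a (j + 1)) :
    a i * ∏ j ∈ Icc (i + 1) t, (1 - a j) ≤ a t := by
  induction t, hit using Nat.le_induction with
  | base => simp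
  | succ t hit ih =>
    calc a i * ∏ j ∈ Icc (i + 1) (t + 1), (1 - a j)
        = (a i * ∏ j ∈ Icc (i + 1) t, (1 - a j)) * (1 - a (t + 1)) := by
          rw [prod_Icc_succ_top (Nat.succ_le_succ hit), mul_assoc]
      _ ≤ a t * (1 - a (t + 1)) := mul_le_mul_of_nonneg_right ih (sub_nonneg.2 (hone t hit))
      _ ≤ a (t + 1) := hstep t hit

theorem sum_sq_le_mul_sum {ι R : Type*} [Semiring R] [PartialOrder R] [IsOrderedRing R]
    {s : Finset ι} {f : ι → R} {c : R} (hnonneg : ∀ i ∈ s, 0 ≤ f i) (hle : ∀ i ∈ s, f i ≤ c) :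
    ∑ i ∈ s, f i ^ 2 ≤ c * ∑ i ∈ s, f i := by
  rw [mul_sum]
  refine sum_le_sum fun i hi => ?_
  rw [sq]
  exact mul_le_mul_of_nonneg_right (hle i hi) (hnonneg i hi)

theorem lr_nonneg (H t : ℕ) : 0 ≤ lr H t := by
  unfold lr
  positivity

theorem lr_le_one (H : ℕ) {t : ℕ} (ht : 1 ≤ t) : lr H t ≤ 1 := by
  have ht' : (1 : ℝ) ≤ t := mod_cast ht
  exact div_le_one_of_le₀ (by gcongr) (by positivity)

theorem one_sub_lr_succ (H t : ℕ) : 1 - lr H (t + 1) = t / (H + (t + 1 : ℕ)) := by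
  have hpos : (H : ℝ) + (t + 1 : ℕ) ≠ 0 := by positivity
  rw [lr, one_sub_div hpos]
  push_cast
  ring

theorem lr_mul_one_sub_lr_succ_le (H t : ℕ) : lr H t * (1 - lr H (t + 1)) ≤ lr H (t + 1) :=
  calc lr H t * (1 - lr H (t + 1))
      = lr H (t + 1) * (t / (H + t)) := by rw [one_sub_lr_succ, lr, lr]; ring
    _ ≤ lr H (t + 1) := mul_le_of_le_one_right (lr_nonneg H (t + 1))
        (div_le_one_of_le₀ (le_add_of_nonneg_left H.cast_nonneg) (by positivity))

theorem lr_le_two_mul_div {H t : ℕ} (hH : 1 ≤ H) (ht : 1 ≤ t) : lr H t ≤ 2 * H / t := by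
  have hH' : (1 : ℝ) ≤ H := mod_cast hH
  have ht' : (0 : ℝ) < t := mod_cast ht
  exact div_le_div₀ (by positivity) (by linarith) ht' (by linarith)

theorem prod_one_sub_lr_nonneg (H i t : ℕ) : 0 ≤ ∏ j ∈ Icc (i + 1) t, (1 - lr H j) :=
  prod_nonneg fun _ hj => sub_nonneg.2 (lr_le_one H (le_of_add_le_right (mem_Icc.1 hj).1))

theorem acoef_of_one_le (H t : ℕ) {i : ℕ} (hi : 1 ≤ i) :
    acoef H t i = lr H i * ∏ j ∈ Icc (i + 1) t, (1 - lr H j) :=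
  if_neg (Nat.one_le_iff_ne_zero.1 hi)

theorem acoef_nonneg (H t i : ℕ) : 0 ≤ acoef H t i := by
  unfold acoef
  split_ifs
  · exact prod_one_sub_lr_nonneg H 0 t
  · exact mul_nonneg (lr_nonneg H i) (prod_one_sub_lr_nonneg H i t)

theorem acoef_le_lr (H : ℕ) {t i : ℕ} (hi : 1 ≤ i) (hit : i ≤ t) : acoef H t i ≤ lr H t := by
  rw [acoef_of_one_le H t hi]
  exact mul_prod_one_sub_le hit (fun j _ => lr_le_one H j.succ_pos)
    fun j _ => lr_mul_one_sub_lr_succ_le H j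

theorem acoef_zero_add_sum_acoef (H t : ℕ) : acoef H t 0 + ∑ i ∈ Icc 1 t, acoef H t i = 1 := by
  rw [acoef, if_pos rfl, sum_congr rfl fun i hi => acoef_of_one_le H t (mem_Icc.1 hi).1]
  exact prod_one_sub_add_sum_mul_prod_one_sub (lr H) t

theorem sum_acoef_le_one (H t : ℕ) : ∑ i ∈ Icc 1 t, acoef H t i ≤ 1 :=
  (le_add_of_nonneg_left (acoef_nonneg H t 0)).trans_eq (acoef_zero_add_sum_acoef H t)

theorem stmt2 (H : ℕ) (hH : 1 ≤ H) :
    ∀ t : ℕ, 1 ≤ t →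
      (∀ i ∈ Finset.Icc 1 t, acoef H t i ≤ 2 * H / t) ∧
      (∑ i ∈ Finset.Icc 1 t, (acoef H t i) ^ 2) ≤ 2 * H / t := by
  intro t ht
  have acoef_le : ∀ i ∈ Icc 1 t, acoef H t i ≤ 2 * H / t := fun i hi =>
    (acoef_le_lr H (mem_Icc.1 hi).1 (mem_Icc.1 hi).2).trans (lr_le_two_mul_div hH ht)
  refine ⟨acoef_le, ?_⟩
  calc ∑ i ∈ Icc 1 t, acoef H t i ^ 2
      ≤ 2 * H / t * ∑ i ∈ Icc 1 t, acoef H t i :=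
        sum_sq_le_mul_sum (fun i _ => acoef_nonneg H t i) acoef_le
    _ ≤ 2 * H / t := mul_le_of_le_one_right (by positivity) (sum_acoef_le_one H t)
end

section
/- (Weighted-regret bound for stabilized online mirror descent.) Let T ≥ 1, let η₁, …, η_{T+1} > 0, let w₁, …, w_{T+1} > 0, and suppose β_i := (η_{i+1}·w_i)/(η_i·w_{i+1}) ∈ (0, 1] for every i ∈ [T]. Let l̂₁, …, l̂_T ∈ ℝ^A have nonnegative entries. Let θ₁ ∈ Δ(A) have strictly positive entries, and for i = 1, …, T define recursively: θ̃_{i+1}(a) = θ_i(a)·exp(−η_i·l̂_i(a)) for each a; θ'_{i+1} is a minimizer of u ↦ D_F(u, θ̃_{i+1}) over Δ(A); and θ_{i+1} = β_i·θ'_{i+1} + (1 − β_i)·θ₁. Then for every θ ∈ Δ(A) and every t ∈ [T]: Σ_{i=1}^t w_i·⟨θ_i − θ, l̂_i⟩ ≤ (w_{t+1}/η_{t+1})·D_F(θ, θ₁) + Σ_{i=1}^t (w_i/η_i)·D_F(θ_i, θ̃_{i+1}). -/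
open Finset Real

/-- The Bregman divergence of the unnormalized negentropy regularizer
`F(θ) = Σ_a (θ a * log (θ a) - θ a)`, namely
`D_F(u,v) = Σ_a u a * log (u a / v a) - Σ_a u a + Σ_a v a`
(extended to nonnegative `u` by the convention `0 * log 0 = 0`,
which holds automatically since `Real.log 0 = 0`). -/
noncomputable def DF {A : ℕ} (u v : Fin A → ℝ) : ℝ :=
  (∑ a, u a * Real.log (u a / v a)) - (∑ a, u a) + ∑ a, v a

/-- The probability simplex `Δ(A)`. -/
def simplex (A : ℕ) : Set (Fin A → ℝ) :=
  {θ | (∀ a, 0 ≤ θ a) ∧ (∑ a, θ a) = 1}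

/-!
In each round the three-point identity for `DF` writes `η i * ⟨θ i - θs, lhat i⟩` as
`DF θs (θ i) - DF θs (θtil (i + 1)) + DF (θ i) (θtil (i + 1))`, and projecting `θtil (i + 1)` onto
the simplex only decreases the divergence from `θs`. With `W i = w i / η i` the mixing coefficient
satisfies `W (i + 1) * β i = W i`, so by convexity of `DF θs` the weighted regret of round `i` is at
most `W i * DF (θ i) (θtil (i + 1))` plus the increment of the potential
`W i * (DF θs (θ 1) - DF θs (θ i))`, which vanishes at `i = 1`.
-/

/-- The open positive orthant of `ℝ^A`, on which the negentropy regularizer is differentiable. -/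
def positiveOrthant (A : ℕ) : Set (Fin A → ℝ) :=
  Set.univ.pi fun _ => Set.Ioi 0

/-- The exponential-weights update: the unconstrained mirror descent step from `x` against the loss
vector `l` with learning rate `η`. -/
noncomputable def expUpdate {A : ℕ} (η : ℝ) (l x : Fin A → ℝ) : Fin A → ℝ :=
  fun a => x a * Real.exp (-η * l a)

/-- The rescaling of `v` to total mass one; for positive `v` this is its Bregman projection onto the
simplex. -/
noncomputable def normalized {A : ℕ} (v : Fin A → ℝ) : Fin A → ℝ :=
  (∑ a, v a)⁻¹ • v

section Divergence

variable {A : ℕ} {u v x p : Fin A → ℝ}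

theorem mem_positiveOrthant : x ∈ positiveOrthant A ↔ ∀ a, 0 < x a := by
  simp [positiveOrthant]

theorem convex_positiveOrthant : Convex ℝ (positiveOrthant A) :=
  convex_pi fun _ _ => convex_Ioi 0

theorem expUpdate_mem_positiveOrthant (η : ℝ) (l : Fin A → ℝ) (hx : x ∈ positiveOrthant A) :
    expUpdate η l x ∈ positiveOrthant A :=
  mem_positiveOrthant.2 fun a => mul_pos (mem_positiveOrthant.1 hx a) (Real.exp_pos _)

theorem DF_self (v : Fin A → ℝ) : DF v v = 0 := by
  simp [DF]

theorem DF_eq_sum_klFun (u : Fin A → ℝ) (hv : ∀ a, v a ≠ 0) :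
    DF u v = ∑ a, v a * InformationTheory.klFun (u a / v a) := by
  rw [DF, ← sum_sub_distrib, ← sum_add_distrib]
  refine sum_congr rfl fun a _ => ?_
  have := hv a
  rw [InformationTheory.klFun_apply]
  field_simp
  ring

theorem mul_klFun_div_nonneg {c y : ℝ} (hc : 0 ≤ c) (hy : 0 ≤ y) :
    0 ≤ y * InformationTheory.klFun (c / y) :=
  mul_nonneg hy (InformationTheory.klFun_nonneg (div_nonneg hc hy))

theorem DF_nonneg (hu : ∀ a, 0 ≤ u a) (hv : v ∈ positiveOrthant A) : 0 ≤ DF u v := by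
  rw [mem_positiveOrthant] at hv
  rw [DF_eq_sum_klFun u fun a => (hv a).ne']
  exact sum_nonneg fun a _ => mul_klFun_div_nonneg (hu a) (hv a).le

theorem DF_eq_zero_iff (hu : ∀ a, 0 ≤ u a) (hv : v ∈ positiveOrthant A) :
    DF u v = 0 ↔ u = v := by
  refine ⟨fun h => ?_, fun h => h ▸ DF_self u⟩
  rw [mem_positiveOrthant] at hv
  rw [DF_eq_sum_klFun u fun a => (hv a).ne',
    sum_eq_zero_iff_of_nonneg fun a _ => mul_klFun_div_nonneg (hu a) (hv a).le] at h
  ext a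
  have klFun_eq_zero := (mul_eq_zero.1 (h a (mem_univ a))).resolve_left (hv a).ne'
  rw [InformationTheory.klFun_eq_zero_iff (div_nonneg (hu a) (hv a).le)] at klFun_eq_zero
  exact (div_eq_one_iff_eq (hv a).ne').1 klFun_eq_zero

theorem DF_mul_right {f : Fin A → ℝ} (u : Fin A → ℝ) (hv : ∀ a, v a ≠ 0) (hf : ∀ a, f a ≠ 0) :
    DF u (v * f) =
      DF u v - ∑ a, u a * Real.log (f a) + (∑ a, v a * f a - ∑ a, v a) := by
  have entry_eq (a : Fin A) : u a * Real.log (u a / (v a * f a)) =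
      u a * Real.log (u a / v a) - u a * Real.log (f a) := by
    rcases eq_or_ne (u a) 0 with h | h
    · simp [h]
    · rw [← div_div, Real.log_div (div_ne_zero h (hv a)) (hf a), mul_sub]
  simp only [DF, Pi.mul_apply, entry_eq, sum_sub_distrib]
  ring

theorem convexOn_mul_log_div {c : ℝ} (hc : 0 ≤ c) :
    ConvexOn ℝ (Set.Ioi 0) fun y => c * Real.log (c / y) := by
  refine ((strictConcaveOn_log_Ioi.concaveOn.neg.smul hc).add_const (c * Real.log c)).congr
    fun y hy => ?_
  rcases hc.eq_or_lt with rfl | hc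
  · simp
  · simp only [Pi.add_apply, Pi.neg_apply, smul_eq_mul, Real.log_div hc.ne' (Set.mem_Ioi.1 hy).ne']
    ring

theorem convexOn_DF_right (hu : ∀ a, 0 ≤ u a) : ConvexOn ℝ (positiveOrthant A) (DF u) := by
  refine ⟨convex_positiveOrthant, fun x hx y hy b c hb hc hbc => ?_⟩
  have log_sum_le : ∑ a, u a * Real.log (u a / (b * x a + c * y a)) ≤
      b * ∑ a, u a * Real.log (u a / x a) + c * ∑ a, u a * Real.log (u a / y a) := by
    rw [mul_sum, mul_sum, ← sum_add_distrib]
    exact sum_le_sum fun a _ =>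
      (convexOn_mul_log_div (hu a)).2 (hx a trivial) (hy a trivial) hb hc hbc
  have mass_eq : ∑ a, u a = b * ∑ a, u a + c * ∑ a, u a := by rw [← add_mul, hbc, one_mul]
  simp only [DF, Pi.add_apply, Pi.smul_apply, smul_eq_mul, sum_add_distrib, ← mul_sum]
  linarith

theorem three_point_expUpdate (η : ℝ) (l u : Fin A → ℝ) (hx : ∀ a, x a ≠ 0) :
    η * ∑ a, (x a - u a) * l a =
      DF u x - DF u (expUpdate η l x) + DF x (expUpdate η l x) := by
  have DF_expUpdate (y : Fin A → ℝ) : DF y (expUpdate η l x) =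
      DF y x + η * ∑ a, y a * l a + (∑ a, expUpdate η l x a - ∑ a, x a) := by
    have h := DF_mul_right y hx fun a => Real.exp_ne_zero (-η * l a)
    simp only [Real.log_exp, mul_left_comm _ (-η), ← mul_sum] at h
    rw [neg_mul, sub_neg_eq_add] at h
    exact h
  rw [DF_expUpdate u, DF_expUpdate x, DF_self]
  simp only [sub_mul, sum_sub_distrib]
  ring

theorem sum_pos_of_mem_simplex (hp : p ∈ simplex A) (hv : v ∈ positiveOrthant A) :
    0 < ∑ a, v a := by
  have univ_nonempty : (univ : Finset (Fin A)).Nonempty :=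
    nonempty_of_sum_ne_zero (hp.2.trans_ne one_ne_zero)
  exact sum_pos (fun a _ => mem_positiveOrthant.1 hv a) univ_nonempty

theorem normalized_mem_positiveOrthant (hv : v ∈ positiveOrthant A) (hsum : 0 < ∑ a, v a) :
    normalized v ∈ positiveOrthant A :=
  mem_positiveOrthant.2 fun a => mul_pos (inv_pos.2 hsum) (mem_positiveOrthant.1 hv a)

theorem normalized_mem_simplex (hv : ∀ a, 0 ≤ v a) (hsum : 0 < ∑ a, v a) :
    normalized v ∈ simplex A := by
  refine ⟨fun a => mul_nonneg (inv_nonneg.2 hsum.le) (hv a), ?_⟩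
  simp only [normalized, Pi.smul_apply, smul_eq_mul, ← mul_sum, inv_mul_cancel₀ hsum.ne']

theorem DF_normalized_right (hu : u ∈ simplex A) (hv : ∀ a, v a ≠ 0) (hsum : ∑ a, v a ≠ 0) :
    DF u (normalized v) = DF u v - (∑ a, v a - 1 - Real.log (∑ a, v a)) := by
  have normalized_eq : normalized v = v * fun _ => (∑ a, v a)⁻¹ := by
    ext a
    exact mul_comm _ _
  rw [normalized_eq, DF_mul_right u hv fun _ => inv_ne_zero hsum, ← sum_mul, ← sum_mul, hu.2,
    mul_inv_cancel₀ hsum, Real.log_inv]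
  ring

theorem eq_normalized_of_isMinOn (hp : p ∈ simplex A) (hv : v ∈ positiveOrthant A)
    (hmin : IsMinOn (DF · v) (simplex A) p) : p = normalized v := by
  have hsum := sum_pos_of_mem_simplex hp hv
  have hpos := normalized_mem_positiveOrthant hv hsum
  rw [mem_positiveOrthant] at hv
  have hmem := normalized_mem_simplex (fun a => (hv a).le) hsum
  refine (DF_eq_zero_iff hp.1 hpos).1 (le_antisymm ?_ (DF_nonneg hp.1 hpos))
  -- On the simplex `DF · (normalized v)` and `DF · v` differ by a constant.
  calc DF p (normalized v)
      = DF p v - (∑ a, v a - 1 - Real.log (∑ a, v a)) :=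
        DF_normalized_right hp (fun a => (hv a).ne') hsum.ne'
    _ ≤ DF (normalized v) v - (∑ a, v a - 1 - Real.log (∑ a, v a)) := by
        gcongr
        exact isMinOn_iff.1 hmin _ hmem
    _ = DF (normalized v) (normalized v) :=
        (DF_normalized_right hmem (fun a => (hv a).ne') hsum.ne').symm
    _ = 0 := DF_self _

theorem mem_positiveOrthant_of_isMinOn (hp : p ∈ simplex A) (hv : v ∈ positiveOrthant A)
    (hmin : IsMinOn (DF · v) (simplex A) p) : p ∈ positiveOrthant A :=
  eq_normalized_of_isMinOn hp hv hmin ▸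
    normalized_mem_positiveOrthant hv (sum_pos_of_mem_simplex hp hv)

theorem DF_le_DF_of_isMinOn (hu : u ∈ simplex A) (hp : p ∈ simplex A)
    (hv : v ∈ positiveOrthant A) (hmin : IsMinOn (DF · v) (simplex A) p) :
    DF u p ≤ DF u v := by
  have hsum := sum_pos_of_mem_simplex hp hv
  rw [eq_normalized_of_isMinOn hp hv hmin,
    DF_normalized_right hu (fun a => (mem_positiveOrthant.1 hv a).ne') hsum.ne']
  linarith [Real.log_le_sub_one_of_pos hsum]

end Divergence

/-- `T` rounds of stabilized online mirror descent with learning rates `η`, mixing coefficients `β`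
and loss vectors `l`: `θ` are the iterates, `θtil` the unconstrained steps and `θ'` their Bregman
projections onto the simplex. The starting point `θ 1` is any positive vector. Rounds are numbered
from `1`; values at other indices are irrelevant. -/
structure IsStabilizedOMD {A : ℕ} (T : ℕ) (η β : ℕ → ℝ) (l θ θtil θ' : ℕ → Fin A → ℝ) : Prop where
  init_pos : ∀ a, 0 < θ 1 a
  coeff_mem : ∀ i ∈ Icc 1 T, 0 ≤ β i ∧ β i ≤ 1
  update : ∀ i ∈ Icc 1 T, ∀ a, θtil (i + 1) a = θ i a * Real.exp (-(η i) * l i a)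
  proj : ∀ i ∈ Icc 1 T, θ' (i + 1) ∈ simplex A ∧
    ∀ u ∈ simplex A, DF (θ' (i + 1)) (θtil (i + 1)) ≤ DF u (θtil (i + 1))
  mix : ∀ i ∈ Icc 1 T, θ (i + 1) = β i • θ' (i + 1) + (1 - β i) • θ 1

namespace IsStabilizedOMD

variable {A T i t : ℕ} {η β W : ℕ → ℝ} {l θ θtil θ' : ℕ → Fin A → ℝ} {u : Fin A → ℝ}

theorem unconstrained_eq (h : IsStabilizedOMD T η β l θ θtil θ') (hi : i ∈ Icc 1 T) :
    θtil (i + 1) = expUpdate (η i) (l i) (θ i) :=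
  funext (h.update i hi)

theorem proj_isMinOn (h : IsStabilizedOMD T η β l θ θtil θ') (hi : i ∈ Icc 1 T) :
    IsMinOn (DF · (θtil (i + 1))) (simplex A) (θ' (i + 1)) :=
  isMinOn_iff.2 (h.proj i hi).2

theorem init_mem_positiveOrthant (h : IsStabilizedOMD T η β l θ θtil θ') :
    θ 1 ∈ positiveOrthant A :=
  mem_positiveOrthant.2 h.init_pos

theorem unconstrained_mem_positiveOrthant (h : IsStabilizedOMD T η β l θ θtil θ')
    (hi : i ∈ Icc 1 T) (hθ : θ i ∈ positiveOrthant A) : θtil (i + 1) ∈ positiveOrthant A :=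
  h.unconstrained_eq hi ▸ expUpdate_mem_positiveOrthant _ _ hθ

theorem proj_mem_positiveOrthant_of_iterate (h : IsStabilizedOMD T η β l θ θtil θ')
    (hi : i ∈ Icc 1 T) (hθ : θ i ∈ positiveOrthant A) : θ' (i + 1) ∈ positiveOrthant A :=
  mem_positiveOrthant_of_isMinOn (h.proj i hi).1 (h.unconstrained_mem_positiveOrthant hi hθ)
    (h.proj_isMinOn hi)

theorem iterate_mem_positiveOrthant (h : IsStabilizedOMD T η β l θ θtil θ')
    (hi : i ∈ Icc 1 (T + 1)) : θ i ∈ positiveOrthant A := by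
  obtain ⟨one_le, le_succ⟩ := mem_Icc.1 hi
  clear hi
  induction i, one_le using Nat.le_induction with
  | base => exact h.init_mem_positiveOrthant
  | succ i one_le ih =>
    have hi : i ∈ Icc 1 T := mem_Icc.2 ⟨one_le, by lia⟩
    obtain ⟨coeff_nonneg, coeff_le_one⟩ := h.coeff_mem i hi
    rw [h.mix i hi]
    exact convex_positiveOrthant (h.proj_mem_positiveOrthant_of_iterate hi (ih (by lia)))
      h.init_mem_positiveOrthant coeff_nonneg (sub_nonneg.2 coeff_le_one) (add_sub_cancel _ _)

theorem regret_round_le (h : IsStabilizedOMD T η β l θ θtil θ') (hu : u ∈ simplex A)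
    (hi : i ∈ Icc 1 T) :
    η i * ∑ a, (θ i a - u a) * l i a ≤
      DF u (θ i) - DF u (θ' (i + 1)) + DF (θ i) (θtil (i + 1)) := by
  have hθ : θ i ∈ positiveOrthant A :=
    h.iterate_mem_positiveOrthant (Icc_subset_Icc_right T.le_succ hi)
  have proj_le : DF u (θ' (i + 1)) ≤ DF u (θtil (i + 1)) :=
    DF_le_DF_of_isMinOn hu (h.proj i hi).1 (h.unconstrained_mem_positiveOrthant hi hθ)
      (h.proj_isMinOn hi)
  rw [three_point_expUpdate _ _ _ fun a => (mem_positiveOrthant.1 hθ a).ne',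
    ← h.unconstrained_eq hi]
  linarith

theorem DF_mix_le (h : IsStabilizedOMD T η β l θ θtil θ') (hu : ∀ a, 0 ≤ u a)
    (hi : i ∈ Icc 1 T) :
    DF u (θ (i + 1)) ≤ β i * DF u (θ' (i + 1)) + (1 - β i) * DF u (θ 1) := by
  obtain ⟨coeff_nonneg, coeff_le_one⟩ := h.coeff_mem i hi
  have hθ := h.iterate_mem_positiveOrthant (Icc_subset_Icc_right T.le_succ hi)
  rw [h.mix i hi]
  exact (convexOn_DF_right hu).2 (h.proj_mem_positiveOrthant_of_iterate hi hθ)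
    h.init_mem_positiveOrthant coeff_nonneg (sub_nonneg.2 coeff_le_one) (add_sub_cancel _ _)

theorem weighted_regret_round_le (h : IsStabilizedOMD T η β l θ θtil θ')
    (hW : ∀ i ∈ Icc 1 (T + 1), 0 ≤ W i) (hWβ : ∀ i ∈ Icc 1 T, W (i + 1) * β i = W i)
    (hu : u ∈ simplex A) (hi : i ∈ Icc 1 T) :
    W i * η i * ∑ a, (θ i a - u a) * l i a ≤
      (W (i + 1) * (DF u (θ 1) - DF u (θ (i + 1))) - W i * (DF u (θ 1) - DF u (θ i)))
        + W i * DF (θ i) (θtil (i + 1)) := by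
  have regret_le := mul_le_mul_of_nonneg_left (h.regret_round_le hu hi)
    (hW i (Icc_subset_Icc_right T.le_succ hi))
  have mix_le := mul_le_mul_of_nonneg_left (h.DF_mix_le hu.1 hi)
    (hW (i + 1) (by simp only [mem_Icc] at hi ⊢; lia))
  have mix_weight_eq : W (i + 1) * (β i * DF u (θ' (i + 1)) + (1 - β i) * DF u (θ 1)) =
      W i * DF u (θ' (i + 1)) + (W (i + 1) - W i) * DF u (θ 1) := by
    rw [← hWβ i hi]
    ring
  linarith

theorem weighted_regret_le (h : IsStabilizedOMD T η β l θ θtil θ')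
    (hW : ∀ i ∈ Icc 1 (T + 1), 0 ≤ W i) (hWβ : ∀ i ∈ Icc 1 T, W (i + 1) * β i = W i)
    (hu : u ∈ simplex A) (ht : t ∈ Icc 1 T) :
    ∑ i ∈ Icc 1 t, W i * η i * ∑ a, (θ i a - u a) * l i a ≤
      W (t + 1) * DF u (θ 1) + ∑ i ∈ Icc 1 t, W i * DF (θ i) (θtil (i + 1)) := by
  obtain ⟨one_le, le_T⟩ := mem_Icc.1 ht
  have last_mem : t + 1 ∈ Icc 1 (T + 1) := mem_Icc.2 ⟨by lia, by lia⟩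
  have last_nonneg : 0 ≤ W (t + 1) * DF u (θ (t + 1)) :=
    mul_nonneg (hW _ last_mem) (DF_nonneg hu.1 (h.iterate_mem_positiveOrthant last_mem))
  let potential (i : ℕ) : ℝ := W i * (DF u (θ 1) - DF u (θ i))
  calc ∑ i ∈ Icc 1 t, W i * η i * ∑ a, (θ i a - u a) * l i a
      ≤ ∑ i ∈ Icc 1 t,
          ((potential (i + 1) - potential i) + W i * DF (θ i) (θtil (i + 1))) :=
        sum_le_sum fun i hi =>
          h.weighted_regret_round_le hW hWβ hu (Icc_subset_Icc_right le_T hi)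
    _ = potential (t + 1) - potential 1 + ∑ i ∈ Icc 1 t, W i * DF (θ i) (θtil (i + 1)) := by
        rw [sum_add_distrib, sum_Icc_sub one_le]
    _ ≤ W (t + 1) * DF u (θ 1) + ∑ i ∈ Icc 1 t, W i * DF (θ i) (θtil (i + 1)) := by
        simp only [potential, sub_self, sub_zero, mul_sub]
        linarith

end IsStabilizedOMD

theorem stmt10_general {A T : ℕ} {η w : ℕ → ℝ} {lhat θ θtil θ' : ℕ → Fin A → ℝ}
    (hη : ∀ i ∈ Icc 1 (T + 1), 0 < η i) (hw : ∀ i ∈ Icc 1 (T + 1), 0 < w i)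
    (h : IsStabilizedOMD T η (fun i => η (i + 1) * w i / (η i * w (i + 1))) lhat θ θtil θ') :
    ∀ θs ∈ simplex A, ∀ t ∈ Icc 1 T,
      (∑ i ∈ Icc 1 t, w i * ∑ a, (θ i a - θs a) * lhat i a) ≤
        (w (t + 1) / η (t + 1)) * DF θs (θ 1)
          + ∑ i ∈ Icc 1 t, (w i / η i) * DF (θ i) (θtil (i + 1)) := by
  intro θs hθs t ht
  have weight_nonneg : ∀ i ∈ Icc 1 (T + 1), 0 ≤ w i / η i :=
    fun i hi => (div_pos (hw i hi) (hη i hi)).le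
  have weight_recursion : ∀ i ∈ Icc 1 T,
      w (i + 1) / η (i + 1) * (η (i + 1) * w i / (η i * w (i + 1))) = w i / η i := by
    intro i hi
    have succ_mem : i + 1 ∈ Icc 1 (T + 1) := by simp only [mem_Icc] at hi ⊢; lia
    have := (hη _ succ_mem).ne'
    have := (hw _ succ_mem).ne'
    field_simp
  have weight_mul_rate : ∀ i ∈ Icc 1 t, w i / η i * η i = w i := fun i hi =>
    div_mul_cancel₀ _ (hη i (Icc_subset_Icc_right (by simp only [mem_Icc] at ht; lia) hi)).ne'
  refine le_of_eq_of_le (sum_congr rfl fun i hi => ?_)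
    (h.weighted_regret_le weight_nonneg weight_recursion hθs ht)
  rw [weight_mul_rate i hi]

/-- Weighted-regret bound for stabilized online mirror descent. -/
theorem stmt10 (A : ℕ) (hA : 1 ≤ A) (T : ℕ) (hT : 1 ≤ T)
    (η w : ℕ → ℝ)
    (hη : ∀ i ∈ Finset.Icc 1 (T + 1), 0 < η i)
    (hw : ∀ i ∈ Finset.Icc 1 (T + 1), 0 < w i)
    (hβ : ∀ i ∈ Finset.Icc 1 T,
      0 < η (i + 1) * w i / (η i * w (i + 1)) ∧ η (i + 1) * w i / (η i * w (i + 1)) ≤ 1)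
    (lhat : ℕ → Fin A → ℝ) (hl : ∀ i ∈ Finset.Icc 1 T, ∀ a, 0 ≤ lhat i a)
    (θ θtil θ' : ℕ → Fin A → ℝ)
    (hθ1 : θ 1 ∈ simplex A) (hθ1pos : ∀ a, 0 < θ 1 a)
    (hθtil : ∀ i ∈ Finset.Icc 1 T, ∀ a,
      θtil (i + 1) a = θ i a * Real.exp (-(η i) * lhat i a))
    (hθ' : ∀ i ∈ Finset.Icc 1 T, θ' (i + 1) ∈ simplex A ∧
      ∀ u ∈ simplex A, DF (θ' (i + 1)) (θtil (i + 1)) ≤ DF u (θtil (i + 1)))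
    (hθrec : ∀ i ∈ Finset.Icc 1 T,
      θ (i + 1) = (η (i + 1) * w i / (η i * w (i + 1))) • θ' (i + 1)
        + (1 - η (i + 1) * w i / (η i * w (i + 1))) • θ 1) :
    ∀ θs ∈ simplex A, ∀ t ∈ Finset.Icc 1 T,
      (∑ i ∈ Finset.Icc 1 t, w i * ∑ a, (θ i a - θs a) * lhat i a) ≤
        (w (t + 1) / η (t + 1)) * DF θs (θ 1)
          + ∑ i ∈ Finset.Icc 1 t, (w i / η i) * DF (θ i) (θtil (i + 1)) := by
  exact stmt10_general hη hw
    ⟨hθ1pos, fun i hi => ⟨(hβ i hi).1.le, (hβ i hi).2⟩, hθtil, hθ', hθrec⟩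
end
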